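/- arXiv:1707.07739 — 2 statements merged into one kernel-verified Lean document; each statement's English description precedes it below -/
import Mathlib

section
/- (Convolution, dependent case.) Let θ > 0 and let p, q > 1 with 1/p + 1/q = 1. Let U₁ and U₂ be service processes on a common probability space (not assumed independent), with U₁ MGF-bounded for pθ with bounding functions (ρ₁, σ₁) and U₂ MGF-bounded for qθ with bounding functions (ρ₂, σ₂), and assume ρ₁(pθ) ≠ ρ₂(qθ). Then the min-plus convolution U₁ ⊗ U₂, defined by (U₁ ⊗ U₂)(s,t) := min_{s≤r≤t} (U₁(s,r) + U₂(r,t)), is MGF-bounded for θ with bounding functions ρ(θ) = max(ρ₁(pθ), ρ₂(qθ)) and σ(θ) = σ₁(pθ) + σ₂(qθ) − (1/θ)·log(1 − e^{−θ|ρ₁(pθ) − ρ₂(qθ)|}). -/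
/-!
Since the infimum over `Icc s t` is attained at some `r`, the exponential
`e^{-θ (U₁ ⊗ U₂)(s,t)}` is at most the sum over `r` of `e^{-θ (U₁(s,r) + U₂(r,t))}`. Hölder's
inequality bounds the expectation of the `r`-th summand by
`e^{θ (ρ₁ (r - s) + ρ₂ (t - r) + σ₁ + σ₂)}` without any independence (`lintegral_exp_add_le`).
Factoring out the larger rate leaves the powers of `x = e^{-θ |ρ₁ - ρ₂|} < 1` with pairwise
distinct exponents (`t - r` or `r - s`), so their sum is at most the geometric series
`1 / (1 - x)`, which is the logarithmic term of `σ`.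
-/

open MeasureTheory ProbabilityTheory

/-- Hölder's inequality for MGF bounds: bounds on `E e^{-pθX}` and `E e^{-qθY}` multiply to a bound
on `E e^{-θ(X+Y)}`. -/
lemma lintegral_exp_add_le {Ω : Type*} [MeasurableSpace Ω] (P : Measure Ω)
    {θ p q : ℝ} (hpq : p.HolderConjugate q) {X Y : Ω → ℝ} (hX : Measurable X) (hY : Measurable Y)
    {a b : ℝ}
    (ha : ∫⁻ ω, ENNReal.ofReal (Real.exp (-(p * θ) * X ω)) ∂P
      ≤ ENNReal.ofReal (Real.exp (p * a)))
    (hb : ∫⁻ ω, ENNReal.ofReal (Real.exp (-(q * θ) * Y ω)) ∂P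
      ≤ ENNReal.ofReal (Real.exp (q * b))) :
    ∫⁻ ω, ENNReal.ofReal (Real.exp (-θ * (X ω + Y ω))) ∂P
      ≤ ENNReal.ofReal (Real.exp (a + b)) := by
  have hp := hpq.pos
  have hq := hpq.symm.pos
  have pow_exp (c y : ℝ) : ENNReal.ofReal (Real.exp y) ^ c = ENNReal.ofReal (Real.exp (y * c)) := by
    rw [ENNReal.ofReal_rpow_of_pos (Real.exp_pos _), ← Real.exp_mul]
  have key := ENNReal.lintegral_mul_le_Lp_mul_Lq P hpq
    (f := fun ω => ENNReal.ofReal (Real.exp (-θ * X ω)))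
    (g := fun ω => ENNReal.ofReal (Real.exp (-θ * Y ω)))
    (by fun_prop) (by fun_prop)
  simp only [Pi.mul_apply, pow_exp] at key
  calc ∫⁻ ω, ENNReal.ofReal (Real.exp (-θ * (X ω + Y ω))) ∂P
      = ∫⁻ ω, ENNReal.ofReal (Real.exp (-θ * X ω)) * ENNReal.ofReal (Real.exp (-θ * Y ω)) ∂P := by
        refine lintegral_congr fun ω => ?_
        rw [← ENNReal.ofReal_mul (Real.exp_nonneg _), ← Real.exp_add, mul_add]
    _ ≤ _ := key
    _ ≤ ENNReal.ofReal (Real.exp (p * a)) ^ (1 / p)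
        * ENNReal.ofReal (Real.exp (q * b)) ^ (1 / q) := by
        refine mul_le_mul' (ENNReal.rpow_le_rpow ?_ (by positivity))
          (ENNReal.rpow_le_rpow ?_ (by positivity))
        · convert ha using 5
          ring
        · convert hb using 5
          ring
    _ = ENNReal.ofReal (Real.exp (a + b)) := by
        rw [pow_exp, pow_exp, ← ENNReal.ofReal_mul (Real.exp_nonneg _), ← Real.exp_add]
        congr 2
        field_simp

/-- Distinct powers of `x ∈ [0, 1)` sum to at most the full geometric series. -/
lemma sum_pow_le_of_injOn {x : ℝ} (h0 : 0 ≤ x) (h1 : x < 1) (S : Finset ℕ) (f : ℕ → ℕ)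
    (hf : Set.InjOn f S) : ∑ r ∈ S, x ^ f r ≤ (1 - x)⁻¹ := by
  rw [← Finset.sum_image (f := fun n => x ^ n) hf, ← tsum_geometric_of_lt_one h0 h1]
  exact (summable_geometric_of_lt_one h0 h1).sum_le_tsum _ fun i _ => pow_nonneg h0 i

/-- The sum of the Hölder bounds over the splitting time `r`, with `σ` factored out. -/
lemma sum_exp_rates_le {θ ρ₁ ρ₂ : ℝ} (hθ : 0 < θ) (hne : ρ₁ ≠ ρ₂) (s t : ℕ) :
    ∑ r ∈ Finset.Icc s t, Real.exp (θ * (ρ₁ * ((r : ℝ) - s) + ρ₂ * ((t : ℝ) - r)))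
      ≤ Real.exp (θ * max ρ₁ ρ₂ * ((t : ℝ) - s)) * (1 - Real.exp (-θ * |ρ₁ - ρ₂|))⁻¹ := by
  have hx1 : Real.exp (-θ * |ρ₁ - ρ₂|) < 1 := by
    rw [Real.exp_lt_one_iff]
    have := mul_pos hθ (abs_pos.mpr (sub_ne_zero.mpr hne))
    linarith
  -- The exponent of `x` counts the steps served at the smaller of the two rates.
  obtain ⟨f, hf, hterm⟩ : ∃ f : ℕ → ℕ, Set.InjOn f (Finset.Icc s t) ∧ ∀ r ∈ Finset.Icc s t,
      Real.exp (θ * (ρ₁ * ((r : ℝ) - s) + ρ₂ * ((t : ℝ) - r)))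
        = Real.exp (θ * max ρ₁ ρ₂ * ((t : ℝ) - s)) * Real.exp (-θ * |ρ₁ - ρ₂|) ^ f r := by
    rcases lt_or_gt_of_ne hne with h | h
    · refine ⟨fun r => r - s, ?_, ?_⟩
      · intro a ha b hb hab
        simp only [Finset.coe_Icc, Set.mem_Icc] at ha hb hab
        omega
      · intro r hr
        rw [Finset.mem_Icc] at hr
        rw [max_eq_right h.le, abs_of_neg (sub_neg.mpr h), ← Real.exp_nat_mul, ← Real.exp_add,
          Nat.cast_sub hr.1]
        congr 1
        ring
    · refine ⟨fun r => t - r, ?_, ?_⟩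
      · intro a ha b hb hab
        simp only [Finset.coe_Icc, Set.mem_Icc] at ha hb hab
        omega
      · intro r hr
        rw [Finset.mem_Icc] at hr
        rw [max_eq_left h.le, abs_of_pos (sub_pos.mpr h), ← Real.exp_nat_mul, ← Real.exp_add,
          Nat.cast_sub hr.2]
        congr 1
        ring
  rw [Finset.sum_congr rfl hterm, ← Finset.mul_sum]
  exact mul_le_mul_of_nonneg_left (sum_pow_le_of_injOn (Real.exp_nonneg _) hx1 _ f hf)
    (Real.exp_nonneg _)

/-- Convolution, dependent case: with Hölder parameters `p, q`,
if `U₁` is MGF-bounded for `pθ` with values `(ρ₁, σ₁) = (ρ₁(pθ), σ₁(pθ))` and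
`U₂` is MGF-bounded for `qθ` with values `(ρ₂, σ₂) = (ρ₂(qθ), σ₂(qθ))`, and `ρ₁ ≠ ρ₂`,
then `U₁ ⊗ U₂` is MGF-bounded for `θ` with `ρ = max(ρ₁, ρ₂)` and
`σ = σ₁ + σ₂ − (1/θ)·log(1 − e^{−θ|ρ₁ − ρ₂|})`. -/
theorem convolution_dependent
    {Ω : Type*} [MeasurableSpace Ω] (P : Measure Ω) [IsProbabilityMeasure P]
    (θ : ℝ) (hθ : 0 < θ)
    (p q : ℝ) (hp : 1 < p) (hq : 1 < q) (hpq : 1 / p + 1 / q = 1)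
    (U₁ U₂ : ℕ → ℕ → Ω → ℝ)
    (ρ₁ σ₁ ρ₂ σ₂ : ℝ)
    -- U₁ and U₂ are service processes
    (hU₁meas : ∀ s t, Measurable (U₁ s t))
    (hU₁nonneg : ∀ s t, s ≤ t → ∀ ω, 0 ≤ U₁ s t ω)
    (hU₂meas : ∀ s t, Measurable (U₂ s t))
    (hU₂nonneg : ∀ s t, s ≤ t → ∀ ω, 0 ≤ U₂ s t ω)
    -- U₁ is MGF-bounded for pθ, U₂ is MGF-bounded for qθ
    (hU₁bound : ∀ s t, s ≤ t →
      ∫⁻ ω, ENNReal.ofReal (Real.exp (-(p * θ) * U₁ s t ω)) ∂P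
        ≤ ENNReal.ofReal (Real.exp (p * θ * ρ₁ * ((t : ℝ) - (s : ℝ)) + p * θ * σ₁)))
    (hU₂bound : ∀ s t, s ≤ t →
      ∫⁻ ω, ENNReal.ofReal (Real.exp (-(q * θ) * U₂ s t ω)) ∂P
        ≤ ENNReal.ofReal (Real.exp (q * θ * ρ₂ * ((t : ℝ) - (s : ℝ)) + q * θ * σ₂)))
    -- the rates differ
    (hne : ρ₁ ≠ ρ₂) :
    ∀ s t, s ≤ t →
      ∫⁻ ω, ENNReal.ofReal
          (Real.exp (-θ * sInf ((fun r => U₁ s r ω + U₂ r t ω) '' Set.Icc s t))) ∂P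
        ≤ ENNReal.ofReal (Real.exp (θ * max ρ₁ ρ₂ * ((t : ℝ) - (s : ℝ))
            + θ * (σ₁ + σ₂ - 1 / θ * Real.log (1 - Real.exp (-θ * |ρ₁ - ρ₂|))))) := by
  intro s t hst
  have hconj : p.HolderConjugate q := by
    rw [Real.holderConjugate_iff]
    exact ⟨hp, by simpa using hpq⟩
  have hx1 : 0 < 1 - Real.exp (-θ * |ρ₁ - ρ₂|) := by
    rw [sub_pos, Real.exp_lt_one_iff]
    have := mul_pos hθ (abs_pos.mpr (sub_ne_zero.mpr hne))
    linarith
  calc ∫⁻ ω, ENNReal.ofReal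
          (Real.exp (-θ * sInf ((fun r => U₁ s r ω + U₂ r t ω) '' Set.Icc s t))) ∂P
      ≤ ∫⁻ ω, ∑ r ∈ Finset.Icc s t,
          ENNReal.ofReal (Real.exp (-θ * (U₁ s r ω + U₂ r t ω))) ∂P := by
        refine lintegral_mono fun ω => ?_
        obtain ⟨r, hr, hr'⟩ := ((Set.nonempty_Icc.mpr hst).image
          (fun r => U₁ s r ω + U₂ r t ω)).csInf_mem ((Set.finite_Icc s t).image _)
        simp only at hr'
        rw [← hr']
        exact Finset.single_le_sum
          (f := fun r => ENNReal.ofReal (Real.exp (-θ * (U₁ s r ω + U₂ r t ω))))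
          (fun _ _ => zero_le) (Finset.mem_Icc.mpr hr)
    _ = ∑ r ∈ Finset.Icc s t,
          ∫⁻ ω, ENNReal.ofReal (Real.exp (-θ * (U₁ s r ω + U₂ r t ω))) ∂P := by
        refine lintegral_finsetSum _ fun r _ => ?_
        have := hU₁meas s r
        have := hU₂meas r t
        fun_prop
    _ ≤ ∑ r ∈ Finset.Icc s t, ENNReal.ofReal
          (Real.exp (θ * (ρ₁ * ((r : ℝ) - s) + ρ₂ * ((t : ℝ) - r)))
            * Real.exp (θ * (σ₁ + σ₂))) := by
        refine Finset.sum_le_sum fun r hr => ?_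
        rw [Finset.mem_Icc] at hr
        refine (lintegral_exp_add_le P hconj (hU₁meas s r) (hU₂meas r t)
          (a := θ * (ρ₁ * ((r : ℝ) - s) + σ₁)) (b := θ * (ρ₂ * ((t : ℝ) - r) + σ₂))
          ((hU₁bound s r hr.1).trans_eq ?_) ((hU₂bound r t hr.2).trans_eq ?_)).trans_eq ?_
        · congr 2
          ring
        · congr 2
          ring
        · rw [← Real.exp_add]
          congr 2
          ring
    _ = ENNReal.ofReal ((∑ r ∈ Finset.Icc s t,
          Real.exp (θ * (ρ₁ * ((r : ℝ) - s) + ρ₂ * ((t : ℝ) - r))))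
            * Real.exp (θ * (σ₁ + σ₂))) := by
        rw [Finset.sum_mul, ENNReal.ofReal_sum_of_nonneg fun _ _ => by positivity]
    _ ≤ _ := by
        refine ENNReal.ofReal_le_ofReal ((mul_le_mul_of_nonneg_right
          (sum_exp_rates_le hθ hne s t) (Real.exp_nonneg _)).trans_eq ?_)
        rw [← Real.exp_log (inv_pos.mpr hx1), Real.log_inv, ← Real.exp_add, ← Real.exp_add]
        congr 1
        field_simp
        ring
end

section
/- (Output bound for an aggregate of two flows.) Let θ > 0. Let A₁, A₂ be flows and U a service process on a common probability space, with A₁, A₂, U mutually stochastically independent, A₁ MGF-bounded for θ with bounding functions (ρ_{A₁}, σ_{A₁}), A₂ MGF-bounded for θ with (ρ_{A₂}, σ_{A₂}), and U MGF-bounded for θ with (ρ_U, σ_U). Let B be the output of a dynamic U-server with input A₁ + A₂. If ρ_{A₁}(θ) + ρ_{A₂}(θ) + ρ_U(θ) < 0, then for all s ≤ t: E[e^{θ B(s,t)}] ≤ e^{θ(ρ_{A₁}(θ)+ρ_{A₂}(θ))(t−s) + θ(σ_{A₁}(θ)+σ_{A₂}(θ)+σ_U(θ))} / (1 − e^{θ(ρ_{A₁}(θ)+ρ_{A₂}(θ)+ρ_U(θ))}).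 -/
/-!
Write `A = A₁ + A₂` and fix `s ≤ t`. The server inequality at time `s` yields, for each `ω`, a
`u ≤ s` attaining the minimum, so that `A u + U u s ≤ B s`; with `B t ≤ A t` this gives
`B t - B s ≤ (A t - A u) - U u s`. Bounding the exponential of the worst case by the sum over all
`u ≤ s` and taking expectations, independence factorizes each summand
(`lintegral_mul_mul_of_iIndep`), and the three MGF bounds turn it into a constant times `q ^ (s - u)`
with `q = exp (θ * (ρA₁ + ρA₂ + ρU)) < 1`. The geometric series gives the factor `1 / (1 - q)`.
-/

open MeasureTheory ProbabilityTheory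

/-- The expectation of a product of three `ℝ≥0∞`-valued random variables, each measurable with
respect to one member of an independent triple of σ-algebras, factorizes. -/
lemma lintegral_mul_mul_of_iIndep {Ω : Type*} [mΩ : MeasurableSpace Ω] {P : Measure Ω}
    {m₁ m₂ m₃ : MeasurableSpace Ω} (hm₁ : m₁ ≤ mΩ) (hm₂ : m₂ ≤ mΩ) (hm₃ : m₃ ≤ mΩ)
    (h : iIndep ![m₁, m₂, m₃] P) {f g k : Ω → ENNReal}
    (hf : Measurable[m₁] f) (hg : Measurable[m₂] g) (hk : Measurable[m₃] k) :
    ∫⁻ ω, f ω * g ω * k ω ∂P = (∫⁻ ω, f ω ∂P) * (∫⁻ ω, g ω ∂P) * ∫⁻ ω, k ω ∂P := by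
  have hX : iIndepFun ![f, g, k] P := by
    rw [iIndepFun_iff_iIndep]
    refine iIndep_of_iIndep_of_le h fun i => ?_
    fin_cases i
    · exact hf.comap_le
    · exact hg.comap_le
    · exact hk.comap_le
  have hmeas : ∀ i, Measurable[mΩ] (![f, g, k] i) := by
    intro i
    fin_cases i
    · exact hf.mono hm₁ le_rfl
    · exact hg.mono hm₂ le_rfl
    · exact hk.mono hm₃ le_rfl
  simpa [Fin.prod_univ_three] using
    lintegral_prod_eq_prod_lintegral_of_indepFun Finset.univ ![f, g, k] hX hmeas

/-- Output bound for an aggregate of two flows through a dynamic `U`-server. -/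
theorem output_bound_aggregate
    {Ω : Type*} [MeasurableSpace Ω] (P : Measure Ω) [IsProbabilityMeasure P]
    (θ : ℝ) (hθ : 0 < θ)
    (A₁ A₂ B : ℕ → Ω → ℝ) (U : ℕ → ℕ → Ω → ℝ)
    (ρA₁ σA₁ ρA₂ σA₂ ρU σU : ℝ)
    -- A₁ and A₂ are flows
    (hA₁meas : ∀ t, Measurable (A₁ t))
    (hA₁mono : ∀ ω, Monotone fun t => A₁ t ω)
    (hA₁zero : ∀ ω, A₁ 0 ω = 0)
    (hA₂meas : ∀ t, Measurable (A₂ t))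
    (hA₂mono : ∀ ω, Monotone fun t => A₂ t ω)
    (hA₂zero : ∀ ω, A₂ 0 ω = 0)
    -- U is a service process
    (hUmeas : ∀ s t, Measurable (U s t))
    (hUnonneg : ∀ s t, s ≤ t → ∀ ω, 0 ≤ U s t ω)
    -- MGF bounds
    (hA₁bound : ∀ s t, s ≤ t →
      ∫⁻ ω, ENNReal.ofReal (Real.exp (θ * (A₁ t ω - A₁ s ω))) ∂P
        ≤ ENNReal.ofReal (Real.exp (θ * ρA₁ * ((t : ℝ) - (s : ℝ)) + θ * σA₁)))
    (hA₂bound : ∀ s t, s ≤ t →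
      ∫⁻ ω, ENNReal.ofReal (Real.exp (θ * (A₂ t ω - A₂ s ω))) ∂P
        ≤ ENNReal.ofReal (Real.exp (θ * ρA₂ * ((t : ℝ) - (s : ℝ)) + θ * σA₂)))
    (hUbound : ∀ s t, s ≤ t →
      ∫⁻ ω, ENNReal.ofReal (Real.exp (-θ * U s t ω)) ∂P
        ≤ ENNReal.ofReal (Real.exp (θ * ρU * ((t : ℝ) - (s : ℝ)) + θ * σU)))
    -- A₁, A₂, U are mutually stochastically independent
    (hIndep : iIndep
      ![⨆ t, MeasurableSpace.comap (A₁ t) inferInstance,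
        ⨆ t, MeasurableSpace.comap (A₂ t) inferInstance,
        ⨆ p : ℕ × ℕ, MeasurableSpace.comap (U p.1 p.2) inferInstance] P)
    -- B is the output of a dynamic U-server with input A₁ + A₂ (and is a flow)
    (hBmeas : ∀ t, Measurable (B t))
    (hBmono : ∀ ω, Monotone fun t => B t ω)
    (hBzero : ∀ ω, B 0 ω = 0)
    (hServer : ∀ t ω, sInf ((fun s => (A₁ s ω + A₂ s ω) + U s t ω) '' Set.Icc 0 t) ≤ B t ω)
    (hBle : ∀ t ω, B t ω ≤ A₁ t ω + A₂ t ω)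
    -- stability condition
    (hstab : ρA₁ + ρA₂ + ρU < 0) :
    ∀ s t, s ≤ t →
      ∫⁻ ω, ENNReal.ofReal (Real.exp (θ * (B t ω - B s ω))) ∂P
        ≤ ENNReal.ofReal (Real.exp (θ * (ρA₁ + ρA₂) * ((t : ℝ) - (s : ℝ))
              + θ * (σA₁ + σA₂ + σU))
            / (1 - Real.exp (θ * (ρA₁ + ρA₂ + ρU)))) := by
  intro s t hst
  set q : ℝ := Real.exp (θ * (ρA₁ + ρA₂ + ρU)) with hq
  have hq1 : q < 1 := Real.exp_lt_one_iff.2 (mul_neg_of_pos_of_neg hθ hstab)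
  set C : ℝ := Real.exp (θ * (ρA₁ + ρA₂) * ((t : ℝ) - (s : ℝ)) + θ * (σA₁ + σA₂ + σU)) with hC
  let f : ℕ → Ω → ENNReal := fun u ω => ENNReal.ofReal (Real.exp (θ * (A₁ t ω - A₁ u ω)))
  let g : ℕ → Ω → ENNReal := fun u ω => ENNReal.ofReal (Real.exp (θ * (A₂ t ω - A₂ u ω)))
  let k : ℕ → Ω → ENNReal := fun u ω => ENNReal.ofReal (Real.exp (-θ * U u s ω))
  have hm₁ : (⨆ t, MeasurableSpace.comap (A₁ t) inferInstance) ≤ ‹MeasurableSpace Ω› :=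
    iSup_le fun t => (hA₁meas t).comap_le
  have hm₂ : (⨆ t, MeasurableSpace.comap (A₂ t) inferInstance) ≤ ‹MeasurableSpace Ω› :=
    iSup_le fun t => (hA₂meas t).comap_le
  have hm₃ : (⨆ p : ℕ × ℕ, MeasurableSpace.comap (U p.1 p.2) inferInstance) ≤
      ‹MeasurableSpace Ω› := iSup_le fun p => (hUmeas p.1 p.2).comap_le
  have hf : ∀ u, Measurable[⨆ t, MeasurableSpace.comap (A₁ t) inferInstance] (f u) := by
    intro u
    have h : ∀ v, Measurable[⨆ t, MeasurableSpace.comap (A₁ t) inferInstance] (A₁ v) := fun v =>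
      (comap_measurable (A₁ v)).mono
        (le_iSup (fun t => MeasurableSpace.comap (A₁ t) inferInstance) v) le_rfl
    exact ENNReal.measurable_ofReal.comp
      (Real.measurable_exp.comp (((h t).sub (h u)).const_mul θ))
  have hg : ∀ u, Measurable[⨆ t, MeasurableSpace.comap (A₂ t) inferInstance] (g u) := by
    intro u
    have h : ∀ v, Measurable[⨆ t, MeasurableSpace.comap (A₂ t) inferInstance] (A₂ v) := fun v =>
      (comap_measurable (A₂ v)).mono
        (le_iSup (fun t => MeasurableSpace.comap (A₂ t) inferInstance) v) le_rfl
    exact ENNReal.measurable_ofReal.comp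
      (Real.measurable_exp.comp (((h t).sub (h u)).const_mul θ))
  have hk : ∀ u, Measurable[⨆ p : ℕ × ℕ, MeasurableSpace.comap (U p.1 p.2) inferInstance]
      (k u) := by
    intro u
    have h : Measurable[⨆ p : ℕ × ℕ, MeasurableSpace.comap (U p.1 p.2) inferInstance] (U u s) :=
      (comap_measurable (U u s)).mono
        (le_iSup (fun p : ℕ × ℕ => MeasurableSpace.comap (U p.1 p.2) inferInstance) (u, s)) le_rfl
    exact ENNReal.measurable_ofReal.comp (Real.measurable_exp.comp (h.const_mul (-θ)))
  have hpoint : ∀ ω, ENNReal.ofReal (Real.exp (θ * (B t ω - B s ω))) ≤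
      ∑ u ∈ Finset.range (s + 1), f u ω * g u ω * k u ω := by
    intro ω
    -- The infimum over the finite set of times `u ≤ s` is attained.
    obtain ⟨u, hu, hmin⟩ :=
      (((Set.nonempty_Icc.2 (Nat.zero_le s)).image
        (fun u => (A₁ u ω + A₂ u ω) + U u s ω)).csInf_mem ((Set.finite_Icc 0 s).image _))
    have hBs : (A₁ u ω + A₂ u ω) + U u s ω ≤ B s ω := hmin.trans_le (hServer s ω)
    have hterm : ENNReal.ofReal (Real.exp (θ * (B t ω - B s ω))) ≤ f u ω * g u ω * k u ω := by
      simp only [f, g, k]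
      rw [← ENNReal.ofReal_mul (by positivity), ← ENNReal.ofReal_mul (by positivity),
        ← Real.exp_add, ← Real.exp_add]
      refine ENNReal.ofReal_le_ofReal (Real.exp_le_exp.2 ?_)
      have h : B t ω - B s ω ≤ (A₁ t ω - A₁ u ω) + (A₂ t ω - A₂ u ω) - U u s ω := by
        linarith [hBle t ω]
      linarith [mul_le_mul_of_nonneg_left h hθ.le]
    exact hterm.trans (Finset.single_le_sum (f := fun u => f u ω * g u ω * k u ω)
      (fun _ _ => zero_le) (Finset.mem_range.2 (Nat.lt_succ_of_le hu.2)))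
  have hexp : ∀ u ∈ Finset.range (s + 1),
      ∫⁻ ω, f u ω * g u ω * k u ω ∂P ≤ ENNReal.ofReal (C * q ^ (s - u)) := by
    intro u hu
    have hus : u ≤ s := Nat.lt_succ_iff.1 (Finset.mem_range.1 hu)
    rw [lintegral_mul_mul_of_iIndep hm₁ hm₂ hm₃ hIndep (hf u) (hg u) (hk u)]
    refine (mul_le_mul' (mul_le_mul' (hA₁bound u t (hus.trans hst))
      (hA₂bound u t (hus.trans hst))) (hUbound u s hus)).trans_eq ?_
    rw [← ENNReal.ofReal_mul (by positivity), ← ENNReal.ofReal_mul (by positivity),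
      ← Real.exp_add, ← Real.exp_add, hC, hq, ← Real.exp_nat_mul, ← Real.exp_add,
      Nat.cast_sub hus]
    congr 2
    ring
  calc ∫⁻ ω, ENNReal.ofReal (Real.exp (θ * (B t ω - B s ω))) ∂P
      ≤ ∫⁻ ω, ∑ u ∈ Finset.range (s + 1), f u ω * g u ω * k u ω ∂P := lintegral_mono hpoint
    _ = ∑ u ∈ Finset.range (s + 1), ∫⁻ ω, f u ω * g u ω * k u ω ∂P :=
        lintegral_finsetSum _ fun u _ => (((hf u).mono hm₁ le_rfl).mul
          ((hg u).mono hm₂ le_rfl)).mul ((hk u).mono hm₃ le_rfl)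
    _ ≤ ∑ u ∈ Finset.range (s + 1), ENNReal.ofReal (C * q ^ (s - u)) := Finset.sum_le_sum hexp
    _ = ENNReal.ofReal (C * ∑ i ∈ Finset.range (s + 1), q ^ i) := by
        rw [← ENNReal.ofReal_sum_of_nonneg fun u _ => by positivity, ← Finset.mul_sum,
          ← Finset.sum_range_reflect (fun i => q ^ i) (s + 1)]
        simp
    _ ≤ ENNReal.ofReal (C / (1 - q)) := by
        have hgeom : ∑ i ∈ Finset.range (s + 1), q ^ i ≤ 1 / (1 - q) := by
          simpa using geom_sum_Ico_le_of_lt_one (m := 0) (n := s + 1) (Real.exp_pos _).le hq1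
        rw [← mul_one_div C]
        exact ENNReal.ofReal_le_ofReal (mul_le_mul_of_nonneg_left hgeom (Real.exp_pos _).le)
end
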